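/- Let 𝚫 ∈ 𝒜 and let 𝒪₁, …, 𝒪_m be the pairwise distinct triangles in 𝚫 (i.e. all of them). If α_i ∈ 𝒪_i for each i ∈ [1,m] and 𝚫' := 𝚫 ∖ {α₁,…,α_m}, then 𝚫' is a gentle quiver of tree type. -/

import Mathlib

/-! Common formalization infrastructure for gentle quivers (Bobinski–Buan,
    "Derived equivalence classification of gentle cluster tilted algebras"). -/

/-- A (finite) quiver with (length-two, monomial) relations.  Vertices and
arrows are natural numbers; `V` and `A` are the finite sets of vertices and
arrows, `src`/`tgt` give the start and terminus of each arrow, and `rel` is the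
set of relations, a relation `(a, b)` standing for the length-two path
`a·b` (so `src a = tgt b`). -/
structure QuivRel where
  V : Finset ℕ
  A : Finset ℕ
  src : ℕ → ℕ
  tgt : ℕ → ℕ
  rel : Finset (ℕ × ℕ)

namespace GentleQuiv

/-- Two vertices are adjacent if some arrow joins them (in either direction). -/
def Adj (Q : QuivRel) (x y : ℕ) : Prop :=
  ∃ a ∈ Q.A, (Q.src a = x ∧ Q.tgt a = y) ∨ (Q.src a = y ∧ Q.tgt a = x)

/-- A quiver is connected if any two of its vertices are joined by a walk. -/
def Connected (Q : QuivRel) : Prop :=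
  ∀ x ∈ Q.V, ∀ y ∈ Q.V, Relation.ReflTransGen (Adj Q) x y

/-- `l = [α₁, …, αₙ]` is a (nonempty) path in the quiver: consecutive arrows
compose, i.e. `s αᵢ = t αᵢ₊₁`. -/
def IsPathList (Q : QuivRel) (l : List ℕ) : Prop :=
  l ≠ [] ∧ (∀ a ∈ l, a ∈ Q.A) ∧ l.Chain' (fun a b => Q.src a = Q.tgt b)

/-- The path `l` contains a subpath (two consecutive arrows) lying in `R`. -/
def HasRelSubpath (Q : QuivRel) (l : List ℕ) : Prop :=
  ∃ a b, (a, b) ∈ Q.rel ∧ [a, b] <:+: l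

/-- Gentle quiver: connected, relations are composable pairs of arrows, at most
two arrows in/out of every vertex, the usual gentleness conditions on
relations, and a global bound forcing finite dimensionality. -/
def IsGentle (Q : QuivRel) : Prop :=
  Q.V.Nonempty ∧
  (∀ a ∈ Q.A, Q.src a ∈ Q.V ∧ Q.tgt a ∈ Q.V) ∧
  Connected Q ∧
  (∀ ρ ∈ Q.rel, ρ.1 ∈ Q.A ∧ ρ.2 ∈ Q.A ∧ Q.src ρ.1 = Q.tgt ρ.2) ∧
  (∀ x, (Q.A.filter fun a => Q.src a = x).card ≤ 2) ∧
  (∀ x, (Q.A.filter fun a => Q.tgt a = x).card ≤ 2) ∧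
  (∀ a ∈ Q.A, (Q.A.filter fun b => Q.src b = Q.tgt a ∧ (b, a) ∉ Q.rel).card ≤ 1) ∧
  (∀ a ∈ Q.A, (Q.A.filter fun c => Q.tgt c = Q.src a ∧ (a, c) ∉ Q.rel).card ≤ 1) ∧
  (∀ a ∈ Q.A, (Q.A.filter fun b => (b, a) ∈ Q.rel).card ≤ 1) ∧
  (∀ a ∈ Q.A, (Q.A.filter fun c => (a, c) ∈ Q.rel).card ≤ 1) ∧
  (∃ n : ℕ, ∀ l : List ℕ, IsPathList Q l → l.length = n → HasRelSubpath Q l)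

/-- A choice of functions `σ, τ : Δ₁ → {±1}` as in Avella-Alaminos–Geiss. -/
structure SigmaTau (Q : QuivRel) where
  σ : ℕ → ℤ
  τ : ℕ → ℤ
  σ_pm : ∀ a ∈ Q.A, σ a = 1 ∨ σ a = -1
  τ_pm : ∀ a ∈ Q.A, τ a = 1 ∨ τ a = -1
  σ_src : ∀ a ∈ Q.A, ∀ b ∈ Q.A, a ≠ b → Q.src a = Q.src b → σ a = -σ b
  τ_tgt : ∀ a ∈ Q.A, ∀ b ∈ Q.A, a ≠ b → Q.tgt a = Q.tgt b → τ a = -τ b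
  rel_iff : ∀ a ∈ Q.A, ∀ b ∈ Q.A, Q.src a = Q.tgt b → ((a, b) ∈ Q.rel ↔ σ a = τ b)

/-- A thread: either a trivial path/antipath `1_{x,ε}` at a vertex `x` with a
sign `ε`, or a sequence of arrows of positive length. -/
inductive Thread where
  | triv (x : ℕ) (ε : ℤ) : Thread
  | arrows (l : List ℕ) : Thread
deriving DecidableEq

/-- Source of a thread. -/
def Thread.source (Q : QuivRel) : Thread → ℕ
  | .triv x _ => x
  | .arrows l => Q.src l.getLast!

/-- Target of a thread. -/
def Thread.target (Q : QuivRel) : Thread → ℕ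
  | .triv x _ => x
  | .arrows l => Q.tgt l.head!

/-- `σω` (for paths and antipaths alike; `σ 1_{x,ε} = ε = σ 1'_{x,ε}`). -/
def Thread.sigma {Q : QuivRel} (st : SigmaTau Q) : Thread → ℤ
  | .triv _ ε => ε
  | .arrows l => st.σ l.getLast!

/-- `τω` when `ω` is regarded as a path (`τ 1_{x,ε} = -ε`). -/
def Thread.tauPath {Q : QuivRel} (st : SigmaTau Q) : Thread → ℤ
  | .triv _ ε => -ε
  | .arrows l => st.τ l.head!

/-- `τω` when `ω` is regarded as an antipath (`τ 1'_{x,ε} = ε`). -/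
def Thread.tauAnti {Q : QuivRel} (st : SigmaTau Q) : Thread → ℤ
  | .triv _ ε => ε
  | .arrows l => st.τ l.head!

/-- Length of a thread. -/
def Thread.len : Thread → ℕ
  | .triv _ _ => 0
  | .arrows l => l.length

/-- A path in `𝚫` of positive length (no two consecutive arrows in `R`). -/
def IsPermList (Q : QuivRel) (l : List ℕ) : Prop :=
  IsPathList Q l ∧ l.Chain' (fun a b => (a, b) ∉ Q.rel)

/-- An antipath in `𝚫` of positive length (all consecutive pairs in `R`). -/
def IsAntiList (Q : QuivRel) (l : List ℕ) : Prop :=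
  l ≠ [] ∧ (∀ a ∈ l, a ∈ Q.A) ∧ l.Chain' (fun a b => (a, b) ∈ Q.rel)

/-- A thread is a path in `𝚫` (including trivial ones). -/
def IsPathThread (Q : QuivRel) : Thread → Prop
  | .triv x ε => x ∈ Q.V ∧ (ε = 1 ∨ ε = -1)
  | .arrows l => IsPermList Q l

/-- A thread is an antipath in `𝚫` (including trivial ones). -/
def IsAntiThread (Q : QuivRel) : Thread → Prop
  | .triv x ε => x ∈ Q.V ∧ (ε = 1 ∨ ε = -1)
  | .arrows l => IsAntiList Q l

/-- `w ∈ ℳ`: `w` is a maximal path of `𝚫`. -/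
def InM (Q : QuivRel) (st : SigmaTau Q) (w : Thread) : Prop :=
  IsPathThread Q w ∧
  (¬ ∃ a ∈ Q.A, Q.src a = w.target Q ∧ st.σ a = -(w.tauPath st)) ∧
  (¬ ∃ b ∈ Q.A, Q.tgt b = w.source Q ∧ st.τ b = -(w.sigma st))

/-- `w ∈ 𝒩`: `w` is a maximal antipath of `𝚫`. -/
def InN (Q : QuivRel) (st : SigmaTau Q) (w : Thread) : Prop :=
  IsAntiThread Q w ∧
  (¬ ∃ a ∈ Q.A, Q.src a = w.target Q ∧ st.σ a = w.tauAnti st) ∧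
  (¬ ∃ b ∈ Q.A, Q.tgt b = w.source Q ∧ st.τ b = w.sigma st)

/-- The graph of the bijection `Φ = φ ∘ ψ : 𝒩 → 𝒩`:  `PhiRel Q st w w'` holds
iff `w, w' ∈ 𝒩` and the maximal path `ψ w` (with `s(ψw) = sw`, `σ(ψw) = -σw`)
satisfies `t w' = t (ψ w)` and `τ w' = -τ(ψ w)`, i.e. `w' = φ (ψ w) = Φ w`. -/
def PhiRel (Q : QuivRel) (st : SigmaTau Q) (w w' : Thread) : Prop :=
  InN Q st w ∧ InN Q st w' ∧
  ∃ m : Thread, InM Q st m ∧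
    m.source Q = w.source Q ∧ m.sigma st = -(w.sigma st) ∧
    w'.target Q = m.target Q ∧ w'.tauAnti st = -(m.tauPath st)

/-- `O` is an orbit of the `ℤ`-action on `𝒩` induced by `Φ`. -/
def NOrbit (Q : QuivRel) (st : SigmaTau Q) (O : Set Thread) : Prop :=
  ∃ w, InN Q st w ∧ O = {w' | Relation.EqvGen (PhiRel Q st) w w'}

/-- `p(𝒪) = |𝒪|` for an orbit `𝒪 ∈ 𝒩/ℤ`. -/
noncomputable def pN (O : Set Thread) : ℕ := O.ncard

/-- `q(𝒪) = Σ_{ω ∈ 𝒪} ℓ(ω)` for an orbit `𝒪 ∈ 𝒩/ℤ`. -/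
noncomputable def qN (O : Set Thread) : ℕ := ∑ᶠ w ∈ O, Thread.len w

/-- `a ∈ 𝒞`: the arrow `a` occurs in no maximal antipath. -/
def InC (Q : QuivRel) (st : SigmaTau Q) (a : ℕ) : Prop :=
  a ∈ Q.A ∧ ¬ ∃ l : List ℕ, InN Q st (.arrows l) ∧ a ∈ l

/-- The graph of the bijection `Ψ : 𝒞 → 𝒞`. -/
def PsiRel (Q : QuivRel) (st : SigmaTau Q) (a b : ℕ) : Prop :=
  InC Q st a ∧ InC Q st b ∧ Q.tgt b = Q.src a ∧ st.τ b = st.σ a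

/-- `O` is an orbit of the `ℤ`-action on `𝒞` induced by `Ψ`. -/
def COrbit (Q : QuivRel) (st : SigmaTau Q) (O : Set ℕ) : Prop :=
  ∃ a, InC Q st a ∧ O = {b | Relation.EqvGen (PsiRel Q st) a b}

/-- The Avella-Alaminos–Geiss invariant `f_𝚫 : ℕ² → ℕ`:  `f_𝚫 (p,q)` counts the
orbits `𝒪 ∈ 𝒩/ℤ ⊔ 𝒞/ℤ` with `p(𝒪) = p` and `q(𝒪) = q`. -/
noncomputable def fInv (Q : QuivRel) (st : SigmaTau Q) : ℕ × ℕ → ℕ := fun pq =>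
  {O : Set Thread | NOrbit Q st O ∧ pN O = pq.1 ∧ qN O = pq.2}.ncard +
  {O : Set ℕ | COrbit Q st O ∧ pq.1 = 0 ∧ O.ncard = pq.2}.ncard

/-- `[p, q] : ℕ² → ℕ`, the characteristic function of `{(p, q)}`. -/
def charFn (p q : ℕ) : ℕ × ℕ → ℕ := fun pq => if pq = (p, q) then 1 else 0

/-- Tree type: `|Δ₀| = |Δ₁| + 1`. -/
def TreeType (Q : QuivRel) : Prop := Q.V.card = Q.A.card + 1

/-- Removing a set of arrows (keeping all vertices); relations containing a
removed arrow are discarded. -/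
def deleteArrows (Q : QuivRel) (S : Finset ℕ) : QuivRel where
  V := Q.V
  A := Q.A \ S
  src := Q.src
  tgt := Q.tgt
  rel := Q.rel.filter fun ρ => ρ.1 ∉ S ∧ ρ.2 ∉ S

/-- Branch arrow: removing it disconnects the quiver. -/
def BranchArrow (Q : QuivRel) (a : ℕ) : Prop :=
  a ∈ Q.A ∧ ¬ Connected (deleteArrows Q {a})

/-- Cycle arrow: removing it leaves the quiver connected. -/
def CycleArrow (Q : QuivRel) (a : ℕ) : Prop :=
  a ∈ Q.A ∧ Connected (deleteArrows Q {a})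

/-- Branch relation: a relation one of whose arrows is a branch arrow. -/
def BranchRel (Q : QuivRel) (ρ : ℕ × ℕ) : Prop :=
  ρ ∈ Q.rel ∧ (BranchArrow Q ρ.1 ∨ BranchArrow Q ρ.2)

/-- A relation `ρ = (α, β)` is isolated if the antipath `(α, β)` is a maximal
antipath, i.e. `ρ ∈ 𝒩`. -/
def Isolated (Q : QuivRel) (st : SigmaTau Q) (ρ : ℕ × ℕ) : Prop :=
  ρ ∈ Q.rel ∧ InN Q st (.arrows [ρ.1, ρ.2])

/-- `Q'` is obtained from `Q` by completing the relations from `R₀`, the new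
arrow attached to `ρ ∈ R₀` being `γ ρ`. -/
structure IsCompletion (Q : QuivRel) (R0 : Finset (ℕ × ℕ)) (γ : ℕ × ℕ → ℕ)
    (Q' : QuivRel) : Prop where
  subset : R0 ⊆ Q.rel
  fresh : ∀ ρ ∈ R0, γ ρ ∉ Q.A
  inj : ∀ ρ ∈ R0, ∀ ρ' ∈ R0, γ ρ = γ ρ' → ρ = ρ'
  V_eq : Q'.V = Q.V
  A_eq : Q'.A = Q.A ∪ R0.image γ
  src_old : ∀ a ∈ Q.A, Q'.src a = Q.src a
  tgt_old : ∀ a ∈ Q.A, Q'.tgt a = Q.tgt a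
  src_new : ∀ ρ ∈ R0, Q'.src (γ ρ) = Q.tgt ρ.1
  tgt_new : ∀ ρ ∈ R0, Q'.tgt (γ ρ) = Q.src ρ.2
  rel_eq : Q'.rel = Q.rel ∪ R0.image (fun ρ => (γ ρ, ρ.1)) ∪
      R0.image (fun ρ => (ρ.2, γ ρ))

/-- A 3-cycle: three pairwise distinct arrows forming an oriented cycle. -/
def Is3Cycle (Q : QuivRel) (a0 a1 a2 : ℕ) : Prop :=
  a0 ∈ Q.A ∧ a1 ∈ Q.A ∧ a2 ∈ Q.A ∧ a0 ≠ a1 ∧ a1 ≠ a2 ∧ a0 ≠ a2 ∧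
  Q.src a0 = Q.tgt a1 ∧ Q.src a1 = Q.tgt a2 ∧ Q.src a2 = Q.tgt a0

/-- A triangle: a 3-cycle all of whose three compositions are relations. -/
def IsTriangleTriple (Q : QuivRel) (a0 a1 a2 : ℕ) : Prop :=
  Is3Cycle Q a0 a1 a2 ∧ (a0, a1) ∈ Q.rel ∧ (a1, a2) ∈ Q.rel ∧ (a2, a0) ∈ Q.rel

/-- The (unordered) set of arrows of a triangle. -/
def TriangleSet (Q : QuivRel) (O : Finset ℕ) : Prop :=
  ∃ a0 a1 a2, O = {a0, a1, a2} ∧ IsTriangleTriple Q a0 a1 a2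

/-- Branch triangle: removing any two of its arrows disconnects the quiver. -/
def BranchTriangle (Q : QuivRel) (O : Finset ℕ) : Prop :=
  TriangleSet Q O ∧ ∀ S ⊆ O, S.card = 2 → ¬ Connected (deleteArrows Q S)

/-- Free relation: a relation neither of whose arrows lies in `𝒞`. -/
def FreeRel (Q : QuivRel) (st : SigmaTau Q) (ρ : ℕ × ℕ) : Prop :=
  ρ ∈ Q.rel ∧ ¬ InC Q st ρ.1 ∧ ¬ InC Q st ρ.2

/-- The class `𝒜`: gentle quivers with `f_𝚫 = m·[0,3] + [p+m+2, p]`. -/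
def ClassA (Q : QuivRel) (st : SigmaTau Q) : Prop :=
  IsGentle Q ∧ ∃ m p : ℕ, ∀ x, fInv Q st x = m * charFn 0 3 x + charFn (p + m + 2) p x

/-- The class `Ã`: gentle quivers with
`f_𝚫 = (m₁+m₂)·[0,3] + [p+m₁, p] + [q+m₂, q]`, `p+m₁ > 0`, `q+m₂ > 0`. -/
def ClassAtilde (Q : QuivRel) (st : SigmaTau Q) : Prop :=
  IsGentle Q ∧ ∃ m1 m2 p q : ℕ, 0 < p + m1 ∧ 0 < q + m2 ∧
    ∀ x, fInv Q st x =
      (m1 + m2) * charFn 0 3 x + charFn (p + m1) p x + charFn (q + m2) q x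

/-- Isomorphism of quivers with relations. -/
def IsoQR (Q Q' : QuivRel) : Prop :=
  ∃ fV fA : ℕ → ℕ,
    Set.BijOn fV ↑Q.V ↑Q'.V ∧ Set.BijOn fA ↑Q.A ↑Q'.A ∧
    (∀ a ∈ Q.A, Q'.src (fA a) = fV (Q.src a) ∧ Q'.tgt (fA a) = fV (Q.tgt a)) ∧
    (∀ a ∈ Q.A, ∀ b ∈ Q.A, ((a, b) ∈ Q.rel ↔ (fA a, fA b) ∈ Q'.rel))

/-- The quiver has no loops. -/
def NoLoops (Q : QuivRel) : Prop := ∀ a ∈ Q.A, Q.src a ≠ Q.tgt a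

/-- The reflection at `x` is defined: every arrow starting at `x` admits a
(necessarily unique) companion arrow ending at `x` not bound by a relation. -/
def CanReflect (Q : QuivRel) (x : ℕ) : Prop :=
  x ∈ Q.V ∧ ∀ a ∈ Q.A, Q.src a = x → ∃ b ∈ Q.A, Q.tgt b = x ∧ (a, b) ∉ Q.rel

/-- `Q'` is the reflection of the gentle loop-free quiver `Q` at the vertex
`x`, following Brenner–Butler tilting. -/
def IsReflection (Q : QuivRel) (x : ℕ) (Q' : QuivRel) : Prop :=
  IsGentle Q ∧ NoLoops Q ∧ CanReflect Q x ∧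
  Q'.V = Q.V ∧ Q'.A = Q.A ∧
  (∀ a ∈ Q.A, Q.tgt a = x → Q'.src a = x ∧ Q'.tgt a = Q.src a) ∧
  (∀ a ∈ Q.A, Q.src a = x →
    ∀ b ∈ Q.A, Q.tgt b = x → (a, b) ∉ Q.rel → Q'.src a = Q.src b) ∧
  (∀ a ∈ Q.A, Q.tgt a ≠ x → Q.src a ≠ x → Q'.src a = Q.src a) ∧
  (∀ a ∈ Q.A, Q.tgt a ≠ x →
    ((∃ b ∈ Q.A, Q.tgt b = x ∧ Q.src b = Q.tgt a ∧ (b, a) ∈ Q.rel) → Q'.tgt a = x) ∧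
    ((¬ ∃ b ∈ Q.A, Q.tgt b = x ∧ Q.src b = Q.tgt a ∧ (b, a) ∈ Q.rel) →
      Q'.tgt a = Q.tgt a)) ∧
  (∀ a b : ℕ, (a, b) ∈ Q'.rel ↔
    (((a, b) ∈ Q.rel ∧ Q.tgt a ≠ x ∧ Q.src a ≠ x) ∨
     (a ∈ Q.A ∧ b ∈ Q.A ∧ Q.src a = x ∧ Q.tgt b = x ∧ (a, b) ∉ Q.rel) ∨
     (a ∈ Q.A ∧ b ∈ Q.A ∧ Q.tgt a = x ∧
       ∃ c ∈ Q.A, c ≠ a ∧ Q.tgt c = x ∧ Q.src c = Q.tgt b ∧ (c, b) ∈ Q.rel)))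

/-- The opposite quiver with relations. -/
def opQR (Q : QuivRel) : QuivRel where
  V := Q.V
  A := Q.A
  src := Q.tgt
  tgt := Q.src
  rel := Q.rel.image fun ρ => (ρ.2, ρ.1)

/-- Coreflection: the dual of reflection. -/
def IsCoreflection (Q : QuivRel) (x : ℕ) (Q' : QuivRel) : Prop :=
  IsReflection (opQR Q) x (opQR Q')

/-- One step of reflection equivalence: a reflection, a coreflection, or an
isomorphism of quivers with relations. -/
def RefStep (Q Q' : QuivRel) : Prop :=
  (∃ x, IsReflection Q x Q') ∨ (∃ x, IsCoreflection Q x Q') ∨ IsoQR Q Q'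

/-- Reflection equivalence: a finite sequence of reflections/coreflections,
up to isomorphism of quivers with relations. -/
def RefEquiv : QuivRel → QuivRel → Prop := Relation.ReflTransGen RefStep

/-- A cyclic orientation of a `1`-cycle quiver without branch arrows (i.e. a
cycle): enumerations of the vertices and arrows by `ZMod n` such that the
`i`-th arrow joins the `i`-th and `(i+1)`-st vertices. -/
structure CyclicOrientation (Q : QuivRel) (n : ℕ) where
  ev : ZMod n → ℕ
  ea : ZMod n → ℕ
  ev_mem : ∀ i, ev i ∈ Q.V
  ea_mem : ∀ i, ea i ∈ Q.A
  ev_inj : Function.Injective ev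
  ea_inj : Function.Injective ea
  ev_surj : ∀ v ∈ Q.V, ∃ i, ev i = v
  ea_surj : ∀ a ∈ Q.A, ∃ i, ea i = a
  compat : ∀ i : ZMod n,
    (Q.src (ea i) = ev i ∧ Q.tgt (ea i) = ev (i + 1)) ∨
    (Q.src (ea i) = ev (i + 1) ∧ Q.tgt (ea i) = ev i)

/-- Clockwise arrow with respect to a cyclic orientation. -/
def Clockwise (Q : QuivRel) {n : ℕ} (co : CyclicOrientation Q n) (a : ℕ) : Prop :=
  a ∈ Q.A ∧ ∃ i : ZMod n, co.ea i = a ∧ Q.src a = co.ev i ∧ Q.tgt a = co.ev (i + 1)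

/-- Anticlockwise arrow with respect to a cyclic orientation. -/
def Anticlockwise (Q : QuivRel) {n : ℕ} (co : CyclicOrientation Q n) (a : ℕ) : Prop :=
  a ∈ Q.A ∧ ∃ i : ZMod n, co.ea i = a ∧ Q.src a = co.ev (i + 1) ∧ Q.tgt a = co.ev i

end GentleQuiv

namespace GentleQuiv

theorem chain_det {R : ℕ → ℕ → Prop} (hR : ∀ a b b', R a b → R a b' → b = b') :
    ∀ (v v' : List ℕ) (c : ℕ), (c :: v).IsChain R → (c :: v').IsChain R →
      (∀ b, ¬ R ((c :: v).getLast!) b) → (∀ b, ¬ R ((c :: v').getLast!) b) → v = v'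
  | [], [], _, _, _, _, _ => rfl
  | [], d :: v', c, _, h2, h3, _ => by
      rw [List.isChain_cons_cons] at h2
      exact absurd h2.1 (h3 d)
  | d :: v, [], c, h1, _, _, h4 => by
      rw [List.isChain_cons_cons] at h1
      exact absurd h1.1 (h4 d)
  | d :: v, e :: v', c, h1, h2, h3, h4 => by
      rw [List.isChain_cons_cons] at h1 h2
      obtain rfl := hR c d e h1.1 h2.1
      rw [chain_det hR v v' d h1.2 h2.2 (by simpa using h3) (by simpa using h4)]

theorem chain_nodup {R : ℕ → ℕ → Prop} (hR : ∀ a b b', R a b → R a b' → b = b') :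
    ∀ (v : List ℕ) (c : ℕ), (c :: v).IsChain R → (∀ b, ¬ R ((c :: v).getLast!) b) →
      (c :: v).Nodup
  | [], c, _, _ => by simp
  | d :: v, c, h1, h2 => by
      have h3 : (d :: v).IsChain R := h1.tail
      have ih := chain_nodup hR v d h3 (by simpa using h2)
      refine List.nodup_cons.2 ⟨fun hc => ?_, ih⟩
      obtain ⟨s, t, hst⟩ := List.append_of_mem hc
      have h4 : (c :: t).IsChain R := by
        rw [hst] at h3
        exact h3.right_of_append
      have h5 : (c :: (d :: v)).getLast! = (c :: t).getLast! := by
        rw [hst, show c :: (s ++ c :: t) = (c :: s) ++ c :: t from rfl]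
        simp only [List.getLast!_eq_getLast?_getD, List.getLast?_append_cons]
      have h6 := chain_det hR (d :: v) t c h1 h4 h2 (by rw [← h5]; exact h2)
      have := congrArg List.length hst
      rw [h6] at this
      simp at this
      omega

/-- Antipath step: `b` directly precedes `a`. -/
def Stp (Q : QuivRel) (st : SigmaTau Q) (a b : ℕ) : Prop :=
  a ∈ Q.A ∧ b ∈ Q.A ∧ Q.src a = Q.tgt b ∧ st.σ a = st.τ b

theorem rel_iff_stp {Q : QuivRel} (hg : IsGentle Q) (st : SigmaTau Q) (a b : ℕ) :
    (a, b) ∈ Q.rel ↔ Stp Q st a b := by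
  obtain ⟨-, -, -, h, -⟩ := hg
  constructor
  · intro hr
    obtain ⟨h1, h2, h3⟩ := h _ hr
    exact ⟨h1, h2, h3, (st.rel_iff a h1 b h2 h3).1 hr⟩
  · rintro ⟨h1, h2, h3, h4⟩
    exact (st.rel_iff a h1 b h2 h3).2 h4

theorem src_inj {Q : QuivRel} (st : SigmaTau Q) {a b : ℕ} (ha : a ∈ Q.A) (hb : b ∈ Q.A)
    (h : Q.src a = Q.src b) (h' : st.σ a = st.σ b) : a = b := by
  by_contra hne
  have h1 := st.σ_src a ha b hb hne h
  have h2 := st.σ_pm b hb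
  omega

theorem tgt_inj {Q : QuivRel} (st : SigmaTau Q) {a b : ℕ} (ha : a ∈ Q.A) (hb : b ∈ Q.A)
    (h : Q.tgt a = Q.tgt b) (h' : st.τ a = st.τ b) : a = b := by
  by_contra hne
  have h1 := st.τ_tgt a ha b hb hne h
  have h2 := st.τ_pm b hb
  omega

theorem Stp.right {Q : QuivRel} {st : SigmaTau Q} {a b b' : ℕ} (h : Stp Q st a b)
    (h' : Stp Q st a b') : b = b' := by
  obtain ⟨h1, h2, h3, h4⟩ := h
  obtain ⟨h5, h6, h7, h8⟩ := h'
  exact tgt_inj st h2 h6 (by omega) (by omega)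

theorem Stp.left {Q : QuivRel} {st : SigmaTau Q} {a a' b : ℕ} (h : Stp Q st a b)
    (h' : Stp Q st a' b) : a = a' := by
  obtain ⟨h1, h2, h3, h4⟩ := h
  obtain ⟨h5, h6, h7, h8⟩ := h'
  exact src_inj st h1 h5 (by omega) (by omega)

theorem antiList_iff {Q : QuivRel} (hg : IsGentle Q) (st : SigmaTau Q) (l : List ℕ) :
    IsAntiList Q l ↔ l ≠ [] ∧ (∀ a ∈ l, a ∈ Q.A) ∧ l.IsChain (Stp Q st) := by
  unfold IsAntiList
  rw [← List.IsChain.iff (rel_iff_stp hg st)]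
  rfl

theorem inN_arrows_iff {Q : QuivRel} (hg : IsGentle Q) (st : SigmaTau Q) (c : ℕ) (v : List ℕ) :
    InN Q st (.arrows (c :: v)) ↔ (∀ a ∈ c :: v, a ∈ Q.A) ∧ (c :: v).IsChain (Stp Q st) ∧
      (∀ a, ¬ Stp Q st a c) ∧ (∀ b, ¬ Stp Q st ((c :: v).getLast!) b) := by
  have hl : (c :: v).getLast! ∈ c :: v := by
    simp [List.getLast!]
  simp only [InN, IsAntiThread, antiList_iff hg st, Thread.target, Thread.source,
    Thread.tauAnti, Thread.sigma, Stp]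
  constructor
  · rintro ⟨⟨-, h1, h2⟩, h3, h4⟩
    refine ⟨h1, h2, fun a ha => h3 ⟨a, ha.1, ha.2.2.1, ha.2.2.2⟩,
      fun b hb => h4 ⟨b, hb.2.1, hb.2.2.1.symm, hb.2.2.2.symm⟩⟩
  · rintro ⟨h1, h2, h3, h4⟩
    refine ⟨⟨by simp, h1, h2⟩, ?_, ?_⟩
    · rintro ⟨a, ha, h5, h6⟩
      exact h3 a ⟨ha, h1 c (by simp), h5, h6⟩
    · rintro ⟨a, ha, h5, h6⟩
      exact h4 a ⟨h1 _ hl, ha, h5.symm, h6.symm⟩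

theorem inN_cases {Q : QuivRel} {st : SigmaTau Q} {w : Thread} (h : InN Q st w) :
    (∃ x ε, w = .triv x ε) ∨ ∃ c v, w = .arrows (c :: v) := by
  match w, h with
  | .triv x ε, _ => exact Or.inl ⟨x, ε, rfl⟩
  | .arrows [], h => exact absurd rfl h.1.1
  | .arrows (c :: v), _ => exact Or.inr ⟨c, v, rfl⟩

/-- Target key of a thread. -/
def key {Q : QuivRel} (st : SigmaTau Q) (w : Thread) : ℕ × ℤ := (w.target Q, w.tauAnti st)

theorem key_injOn {Q : QuivRel} (hg : IsGentle Q) (st : SigmaTau Q) :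
    Set.InjOn (key st) {w | InN Q st w} := by
  have aux : ∀ x ε c v, InN Q st (.triv x ε) → InN Q st (.arrows (c :: v)) →
      key st (.triv x ε) ≠ key st (.arrows (c :: v)) := by
    intro x ε c v h1 h2 h
    have h3 := (inN_arrows_iff hg st c v).1 h2
    simp only [key, Thread.target, Thread.tauAnti, Prod.mk.injEq] at h
    exact h1.2.2 ⟨c, h3.1 c (by simp), h.1.symm, h.2.symm⟩
  intro w hw w' hw' h
  rcases inN_cases hw with ⟨x, ε, rfl⟩ | ⟨c, v, rfl⟩ <;>
    rcases inN_cases hw' with ⟨x', ε', rfl⟩ | ⟨c', v', rfl⟩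
  · simp only [key, Thread.target, Thread.tauAnti, Prod.mk.injEq] at h
    rw [h.1, h.2]
  · exact absurd h (aux _ _ _ _ hw hw')
  · exact absurd h.symm (aux _ _ _ _ hw' hw)
  · have h1 := (inN_arrows_iff hg st c v).1 hw
    have h2 := (inN_arrows_iff hg st c' v').1 hw'
    simp only [key, Thread.target, Thread.tauAnti, Prod.mk.injEq] at h
    have : c = c' := tgt_inj st (h1.1 c (by simp)) (h2.1 c' (by simp)) h.1 h.2
    subst this
    rw [chain_det (R := Stp Q st) (fun _ _ _ => Stp.right) v v' c h1.2.1 h2.2.1 h1.2.2.2 h2.2.2.2]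

/-- Keys available. -/
def allKeys (Q : QuivRel) : Finset (ℕ × ℤ) := Q.V ×ˢ {1, -1}

theorem card_allKeys (Q : QuivRel) : (allKeys Q).card = 2 * Q.V.card := by
  simp [allKeys, Finset.card_product, mul_comm]

/-- Keys of sources of arrows. -/
def srcKeys (Q : QuivRel) (st : SigmaTau Q) : Finset (ℕ × ℤ) :=
  Q.A.image fun a => (Q.src a, st.σ a)

theorem card_srcKeys (Q : QuivRel) (st : SigmaTau Q) : (srcKeys Q st).card = Q.A.card := by
  apply Finset.card_image_of_injOn
  intro a ha b hb h
  simp only [Prod.mk.injEq] at h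
  exact src_inj st ha hb h.1 h.2

theorem srcKeys_sub {Q : QuivRel} (hg : IsGentle Q) (st : SigmaTau Q) :
    srcKeys Q st ⊆ allKeys Q := by
  intro k hk
  simp only [srcKeys, Finset.mem_image] at hk
  obtain ⟨a, ha, rfl⟩ := hk
  have := st.σ_pm a ha
  simp only [allKeys, Finset.mem_product, Finset.mem_insert, Finset.mem_singleton]
  exact ⟨(hg.2.1 a ha).1, this⟩

theorem key_mem {Q : QuivRel} (hg : IsGentle Q) (st : SigmaTau Q) {w : Thread}
    (hw : InN Q st w) : key st w ∈ allKeys Q \ srcKeys Q st := by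
  rw [Finset.mem_sdiff]
  constructor
  · rcases inN_cases hw with ⟨x, ε, rfl⟩ | ⟨c, v, rfl⟩
    · have := hw.1
      simpa [allKeys, key, Thread.target, Thread.tauAnti, IsAntiThread] using this
    · have h1 := ((inN_arrows_iff hg st c v).1 hw).1 c (by simp)
      have := st.τ_pm c h1
      simp only [allKeys, Finset.mem_product, Finset.mem_insert, Finset.mem_singleton, key,
        Thread.target, Thread.tauAnti, List.head!]
      exact ⟨(hg.2.1 c h1).2, this⟩
  · intro h
    simp only [srcKeys, Finset.mem_image, key, Prod.mk.injEq] at h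
    exact hw.2.1 h

theorem N_finite {Q : QuivRel} (hg : IsGentle Q) (st : SigmaTau Q) :
    {w | InN Q st w}.Finite :=
  Set.Finite.of_finite_image
    ((allKeys Q \ srcKeys Q st).finite_toSet.subset (by
      rintro _ ⟨w, hw, rfl⟩
      exact key_mem hg st hw)) (key_injOn hg st)

theorem N_card {Q : QuivRel} (hg : IsGentle Q) (st : SigmaTau Q) :
    {w | InN Q st w}.ncard + Q.A.card ≤ 2 * Q.V.card := by
  have h1 : {w | InN Q st w}.ncard ≤ (allKeys Q \ srcKeys Q st).card := by
    rw [← Set.ncard_coe_finset]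
    exact Set.ncard_le_ncard_of_injOn (key st) (fun w hw => key_mem hg st hw) (key_injOn hg st)
  have h2 := Finset.card_sdiff_add_card_eq_card (srcKeys_sub hg st)
  rw [card_srcKeys, card_allKeys] at h2
  omega

/-- Arrows of a thread. -/
def arr : Thread → List ℕ
  | .triv _ _ => []
  | .arrows l => l

theorem arrows_cover {Q : QuivRel} (hg : IsGentle Q) (st : SigmaTau Q) :
    Q.A.card ≤ (∑ᶠ w ∈ {w | InN Q st w}, Thread.len w) + {a | InC Q st a}.ncard := by
  classical
  have hC : {a | InC Q st a}.Finite := Q.A.finite_toSet.subset fun a ha => ha.1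
  rw [finsum_mem_eq_finite_toFinset_sum _ (N_finite hg st), Set.ncard_eq_toFinset_card _ hC]
  have hsub : Q.A ⊆ ((N_finite hg st).toFinset.biUnion fun w => (arr w).toFinset) ∪
      hC.toFinset := by
    intro a ha
    rw [Finset.mem_union]
    by_cases h : InC Q st a
    · right; simpa using h
    · left
      simp only [InC, not_and, not_not] at h
      obtain ⟨l, hl, hal⟩ := h ha
      simp only [Finset.mem_biUnion, Set.Finite.mem_toFinset, List.mem_toFinset]
      exact ⟨_, hl, hal⟩
  refine (Finset.card_le_card hsub).trans ((Finset.card_union_le _ _).trans ?_)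
  gcongr
  refine Finset.card_biUnion_le.trans (Finset.sum_le_sum fun w _ => ?_)
  refine (List.toFinset_card_le _).trans ?_
  cases w <;> simp [arr, Thread.len]

theorem exists_pred {Q : QuivRel} (hg : IsGentle Q) (st : SigmaTau Q) {a : ℕ}
    (ha : InC Q st a) : ∃ b, Stp Q st a b := by
  by_contra hno
  push Not at hno
  have key : ∀ n : ℕ, ∃ c v, (∀ x ∈ c :: v, x ∈ Q.A) ∧ (c :: v).IsChain (Stp Q st) ∧
      (c :: v).getLast! = a ∧ (c :: v).length = n + 1 := by
    intro n
    induction n with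
    | zero => exact ⟨a, [], by simpa using ha.1, by simp, by simp, by simp⟩
    | succ n ih =>
      obtain ⟨c, v, h1, h2, h3, h4⟩ := ih
      have : ∃ d, Stp Q st d c := by
        by_contra hd
        push Not at hd
        apply ha.2
        refine ⟨c :: v, (inN_arrows_iff hg st c v).2 ⟨h1, h2, hd, by rw [h3]; exact hno⟩, ?_⟩
        rw [← h3]
        simp [List.getLast!]
      obtain ⟨d, hd⟩ := this
      refine ⟨d, c :: v, ?_, ?_, ?_, ?_⟩
      · intro x hx
        rcases List.mem_cons.1 hx with rfl | hx
        · exact hd.1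
        · exact h1 x hx
      · exact List.isChain_cons_cons.2 ⟨hd, h2⟩
      · rw [← h3]; simp [List.getLast!]
      · simp at h4 ⊢; omega
  obtain ⟨c, v, h1, h2, h3, h4⟩ := key Q.A.card
  have h5 := chain_nodup (R := Stp Q st) (fun _ _ _ => Stp.right) v c h2 (by rw [h3]; exact hno)
  have h6 : (c :: v).toFinset ⊆ Q.A := fun x hx => h1 x (List.mem_toFinset.1 hx)
  have := Finset.card_le_card h6
  rw [List.toFinset_card_of_nodup h5] at this
  omega

theorem inC_pred {Q : QuivRel} (hg : IsGentle Q) (st : SigmaTau Q) {a b : ℕ}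
    (ha : InC Q st a) (hab : Stp Q st a b) : InC Q st b := by
  refine ⟨hab.2.1, ?_⟩
  rintro ⟨l, hl, hb⟩
  match l, hl, hb with
  | c :: v, hl, hb =>
    obtain ⟨u, t, hut⟩ := List.append_of_mem hb
    have h := (inN_arrows_iff hg st c v).1 hl
    rcases List.eq_nil_or_concat u with rfl | ⟨u', d, rfl⟩
    · simp only [List.nil_append, List.cons.injEq] at hut
      rw [hut.1] at h
      exact h.2.2.1 a hab
    · have h2 := h.2.1
      rw [hut] at h2
      simp only [List.concat_eq_append, List.append_assoc, List.singleton_append] at h2 hut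
      have h3 := h2.right_of_append
      rw [List.isChain_cons_cons] at h3
      have : d = a := h3.1.left hab
      subst this
      exact ha.2 ⟨c :: v, hl, by rw [hut]; simp⟩

theorem psi_iff {Q : QuivRel} (st : SigmaTau Q) {a b : ℕ} :
    PsiRel Q st a b ↔ InC Q st a ∧ InC Q st b ∧ Stp Q st a b := by
  unfold PsiRel Stp
  constructor
  · rintro ⟨h1, h2, h3, h4⟩
    exact ⟨h1, h2, h1.1, h2.1, h3.symm, h4.symm⟩
  · rintro ⟨h1, h2, -, -, h3, h4⟩
    exact ⟨h1, h2, h3.symm, h4.symm⟩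

theorem class_sub {Q : QuivRel} {st : SigmaTau Q} {S : Set ℕ} (h : ∀ x y, PsiRel Q st x y →
    (x ∈ S ↔ y ∈ S)) {a : ℕ} (ha : a ∈ S) : {b | Relation.EqvGen (PsiRel Q st) a b} ⊆ S := by
  intro b hb
  have : ∀ x y, Relation.EqvGen (PsiRel Q st) x y → (x ∈ S ↔ y ∈ S) := by
    intro x y hxy
    induction hxy with
    | rel x y h' => exact h x y h'
    | refl x => rfl
    | symm x y _ ih => exact ih.symm
    | trans x y z _ _ h1 h2 => exact h1.trans h2
  exact (this a b hb).1 ha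

theorem orbit_triangle {Q : QuivRel} (hg : IsGentle Q) (st : SigmaTau Q) {O : Set ℕ}
    (hO : COrbit Q st O) (h3 : O.ncard = 3) : ∃ T : Finset ℕ, (T : Set ℕ) = O ∧
      TriangleSet Q T := by
  obtain ⟨a, ha, rfl⟩ := hO
  obtain ⟨b, hab⟩ := exists_pred hg st ha
  have hb := inC_pred hg st ha hab
  obtain ⟨c, hbc⟩ := exists_pred hg st hb
  have hc := inC_pred hg st hb hbc
  obtain ⟨d, hcd⟩ := exists_pred hg st hc
  have hd := inC_pred hg st hc hcd
  have hsz : ∀ x y : ℕ, ({x, y} : Set ℕ).ncard ≤ 2 := fun x y => by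
    have := Finset.card_le_two (a := x) (b := y)
    rw [← Set.ncard_coe_finset] at this
    simpa using this
  have n1 : a ≠ c := by
    rintro rfl
    have := class_sub (Q := Q) (st := st) (S := {a, b}) (a := a) (by
      intro x y hxy
      have hs := ((psi_iff st).1 hxy).2.2
      simp only [Set.mem_insert_iff, Set.mem_singleton_iff]
      constructor
      · rintro (rfl | rfl)
        · exact Or.inr (hs.right hab)
        · exact Or.inl (hs.right hbc)
      · rintro (rfl | rfl)
        · exact Or.inr (hs.left hbc)
        · exact Or.inl (hs.left hab)) (by simp)
    have := Set.ncard_le_ncard this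
    have := hsz a b
    omega
  have n2 : a ≠ b := by
    rintro rfl
    exact n1 (hab.right hbc)
  have n3 : b ≠ c := by
    rintro rfl
    exact n2 (hab.left hbc)
  have rab : Relation.EqvGen (PsiRel Q st) a b := .rel _ _ ((psi_iff st).2 ⟨ha, hb, hab⟩)
  have rac : Relation.EqvGen (PsiRel Q st) a c :=
    rab.trans _ _ _ (.rel _ _ ((psi_iff st).2 ⟨hb, hc, hbc⟩))
  have rad : Relation.EqvGen (PsiRel Q st) a d :=
    rac.trans _ _ _ (.rel _ _ ((psi_iff st).2 ⟨hc, hd, hcd⟩))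
  have heq : (({a, b, c} : Finset ℕ) : Set ℕ) = {b | Relation.EqvGen (PsiRel Q st) a b} := by
    apply Set.eq_of_subset_of_ncard_le
    · intro x hx
      simp only [Finset.coe_insert, Finset.coe_singleton, Set.mem_insert_iff,
        Set.mem_singleton_iff] at hx
      rcases hx with rfl | rfl | rfl
      · exact .refl _
      · exact rab
      · exact rac
    · rw [h3, Set.ncard_coe_finset, Finset.card_eq_three.2 ⟨a, b, c, n2, n1, n3, rfl⟩]
    · exact Set.finite_of_ncard_ne_zero (by omega)
  refine ⟨{a, b, c}, heq, a, b, c, rfl, ?_⟩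
  have hda : d = a := by
    have : d ∈ (({a, b, c} : Finset ℕ) : Set ℕ) := by rw [heq]; exact rad
    simp only [Finset.coe_insert, Finset.coe_singleton, Set.mem_insert_iff,
        Set.mem_singleton_iff] at this
    rcases this with h | h | h
    · exact h
    · rw [h] at hcd
      exact absurd (hab.left hcd) n1
    · rw [h] at hcd
      exact absurd (hbc.left hcd) n3
  rw [hda] at hcd
  exact ⟨⟨ha.1, hb.1, hc.1, n2, n3, n1, hab.2.2.1, hbc.2.2.1, hcd.2.2.1⟩,
    (rel_iff_stp hg st _ _).2 hab, (rel_iff_stp hg st _ _).2 hbc, (rel_iff_stp hg st _ _).2 hcd⟩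

theorem eqvGen_inN {Q : QuivRel} {st : SigmaTau Q} {w w' : Thread}
    (h : Relation.EqvGen (PhiRel Q st) w w') : InN Q st w ↔ InN Q st w' := by
  induction h with
  | rel x y h' => exact ⟨fun _ => h'.2.1, fun _ => h'.1⟩
  | refl x => rfl
  | symm x y _ ih => exact ih.symm
  | trans x y z _ _ h1 h2 => exact h1.trans h2

theorem eqvGen_inC {Q : QuivRel} {st : SigmaTau Q} {w w' : ℕ}
    (h : Relation.EqvGen (PsiRel Q st) w w') : InC Q st w ↔ InC Q st w' := by
  induction h with
  | rel x y h' => exact ⟨fun _ => h'.2.1, fun _ => h'.1⟩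
  | refl x => rfl
  | symm x y _ ih => exact ih.symm
  | trans x y z _ _ h1 h2 => exact h1.trans h2

theorem NOrbit.sub {Q : QuivRel} {st : SigmaTau Q} {O : Set Thread} (h : NOrbit Q st O) :
    O ⊆ {w | InN Q st w} := by
  obtain ⟨w, hw, rfl⟩ := h
  exact fun w' h' => (eqvGen_inN h').1 hw

theorem COrbit.sub {Q : QuivRel} {st : SigmaTau Q} {O : Set ℕ} (h : COrbit Q st O) :
    O ⊆ {w | InC Q st w} := by
  obtain ⟨w, hw, rfl⟩ := h
  exact fun w' h' => (eqvGen_inC h').1 hw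

theorem C_finite (Q : QuivRel) (st : SigmaTau Q) : {a | InC Q st a}.Finite :=
  Q.A.finite_toSet.subset fun _ ha => ha.1

theorem NOrbits_finite {Q : QuivRel} (hg : IsGentle Q) (st : SigmaTau Q) :
    {O | NOrbit Q st O}.Finite :=
  (N_finite hg st).finite_subsets.subset fun _ h => NOrbit.sub h

theorem COrbits_finite (Q : QuivRel) (st : SigmaTau Q) :
    {O | COrbit Q st O}.Finite :=
  (C_finite Q st).finite_subsets.subset fun _ h => COrbit.sub h

theorem pN_pos {Q : QuivRel} (hg : IsGentle Q) {st : SigmaTau Q} {O : Set Thread}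
    (h : NOrbit Q st O) : pN O ≠ 0 := by
  have hf : O.Finite := (N_finite hg st).subset h.sub
  obtain ⟨w, hw, rfl⟩ := h
  have := (Set.ncard_pos hf).2 ⟨w, .refl _⟩
  unfold pN
  omega

/-- The numerical consequences of the shape of the invariant. -/
theorem classA_counts {Q : QuivRel} (hg : IsGentle Q) (st : SigmaTau Q) (m p : ℕ)
    (hf : ∀ x, fInv Q st x = m * charFn 0 3 x + charFn (p + m + 2) p x) :
    {w | InN Q st w}.ncard = p + m + 2 ∧
    (∑ᶠ w ∈ {w | InN Q st w}, Thread.len w) = p ∧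
    (∀ O, COrbit Q st O → O.ncard = 3) ∧ {O | COrbit Q st O}.ncard = m := by
  have hC3 : ∀ O, COrbit Q st O → O.ncard = 3 := by
    intro O hO
    by_contra hne
    have h := hf (0, O.ncard)
    have h1 : charFn 0 3 (0, O.ncard) = 0 := by simp [charFn, hne]
    have h2 : charFn (p + m + 2) p (0, O.ncard) = 0 := by simp [charFn]
    rw [h1, h2] at h
    simp only [fInv] at h
    have h3 : {O' : Set ℕ | COrbit Q st O' ∧ True ∧ O'.ncard = O.ncard}.ncard = 0 := by omega
    rw [Set.ncard_eq_zero ((COrbits_finite Q st).subset fun _ h => h.1)] at h3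
    have : O ∈ (∅ : Set (Set ℕ)) := by rw [← h3]; exact ⟨hO, trivial, rfl⟩
    exact this
  have hCm : {O | COrbit Q st O}.ncard = m := by
    have h := hf (0, 3)
    have h1 : charFn 0 3 (0, 3) = 1 := by simp [charFn]
    have h2 : charFn (p + m + 2) p (0, 3) = 0 := by simp [charFn]
    rw [h1, h2] at h
    simp only [fInv] at h
    have h3 : {O : Set Thread | NOrbit Q st O ∧ pN O = 0 ∧ qN O = 3} = ∅ := by
      ext O
      simp only [Set.mem_ofPred_eq, Set.mem_empty_iff_false, iff_false]
      exact fun h => pN_pos hg h.1 h.2.1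
    have h4 : {O : Set ℕ | COrbit Q st O ∧ True ∧ O.ncard = 3} = {O | COrbit Q st O} := by
      ext O
      exact ⟨fun h => h.1, fun h => ⟨h, trivial, hC3 O h⟩⟩
    rw [h3, Set.ncard_empty] at h
    rw [← h4]
    omega
  have hNpq : ∀ O, NOrbit Q st O → pN O = p + m + 2 ∧ qN O = p := by
    intro O hO
    by_contra hne
    have h := hf (pN O, qN O)
    have h1 : charFn 0 3 (pN O, qN O) = 0 := by simp [charFn, pN_pos hg hO]
    have h2 : charFn (p + m + 2) p (pN O, qN O) = 0 := by
      simp only [charFn, Prod.mk.injEq, hne, if_false]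
    rw [h1, h2] at h
    simp only [fInv] at h
    have h3 : {O' : Set Thread | NOrbit Q st O' ∧ pN O' = pN O ∧ qN O' = qN O}.ncard = 0 := by
      omega
    rw [Set.ncard_eq_zero ((NOrbits_finite hg st).subset fun _ h => h.1)] at h3
    have : O ∈ (∅ : Set (Set Thread)) := by rw [← h3]; exact ⟨hO, rfl, rfl⟩
    exact this
  have hN1 : {O | NOrbit Q st O}.ncard = 1 := by
    have h := hf (p + m + 2, p)
    have h1 : charFn 0 3 (p + m + 2, p) = 0 := by simp [charFn]
    have h2 : charFn (p + m + 2) p (p + m + 2, p) = 1 := by simp [charFn]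
    rw [h1, h2] at h
    simp only [fInv] at h
    have h3 : {O : Set ℕ | COrbit Q st O ∧ p + m + 2 = 0 ∧ O.ncard = p} = ∅ := by
      ext O
      simp
    have h4 : {O : Set Thread | NOrbit Q st O ∧ pN O = p + m + 2 ∧ qN O = p} =
        {O | NOrbit Q st O} := by
      ext O
      exact ⟨fun h => h.1, fun h => ⟨h, hNpq O h⟩⟩
    rw [h3, h4, Set.ncard_empty] at h
    omega
  obtain ⟨O, hO⟩ := Set.ncard_eq_one.1 hN1
  have hOO : NOrbit Q st O := by
    have : O ∈ {O | NOrbit Q st O} := by rw [hO]; rfl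
    exact this
  have hall : {w | InN Q st w} = O := by
    apply Set.Subset.antisymm _ hOO.sub
    intro w hw
    have h1 : {w' | Relation.EqvGen (PhiRel Q st) w w'} ∈ {O | NOrbit Q st O} := ⟨w, hw, rfl⟩
    rw [hO] at h1
    rw [← Set.mem_singleton_iff.1 h1]
    exact .refl _
  obtain ⟨h1, h2⟩ := hNpq O hOO
  rw [hall]
  exact ⟨h1, h2, hC3, hCm⟩

theorem C_card {Q : QuivRel} {st : SigmaTau Q} (h3 : ∀ O, COrbit Q st O → O.ncard = 3) :
    {a | InC Q st a}.ncard ≤ 3 * {O | COrbit Q st O}.ncard := by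
  classical
  have hsub : {a | InC Q st a} ⊆ ⋃ O ∈ (COrbits_finite Q st).toFinset, O := by
    intro a ha
    simp only [Set.Finite.mem_toFinset, Set.mem_iUnion]
    exact ⟨_, ⟨a, ha, rfl⟩, .refl _⟩
  have hfin : (⋃ O ∈ (COrbits_finite Q st).toFinset, O).Finite := by
    apply (C_finite Q st).subset
    intro a ha
    simp only [Set.Finite.mem_toFinset, Set.mem_iUnion] at ha
    obtain ⟨O, hO, ha⟩ := ha
    exact COrbit.sub hO ha
  refine (Set.ncard_le_ncard hsub hfin).trans ?_
  refine (Finset.set_ncard_biUnion_le _ _).trans ?_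
  rw [Set.ncard_eq_toFinset_card _ (COrbits_finite Q st), mul_comm, ← smul_eq_mul]
  apply Finset.sum_le_card_nsmul
  intro O hO
  rw [Set.Finite.mem_toFinset] at hO
  exact (h3 O hO).le

theorem triangle_at {Q : QuivRel} {T : Finset ℕ} (hT : TriangleSet Q T) {a : ℕ} (ha : a ∈ T) :
    ∃ b c, T = {a, b, c} ∧ IsTriangleTriple Q a b c := by
  obtain ⟨x, y, z, rfl, ⟨⟨h1, h2, h3, h4, h5, h6, h7, h8, h9⟩, r1, r2, r3⟩⟩ := hT
  simp only [Finset.mem_insert, Finset.mem_singleton] at ha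
  rcases ha with rfl | rfl | rfl
  · exact ⟨y, z, rfl, ⟨⟨h1, h2, h3, h4, h5, h6, h7, h8, h9⟩, r1, r2, r3⟩⟩
  · refine ⟨z, x, ?_, ⟨⟨h2, h3, h1, h5, h6.symm, h4.symm, h8, h9, h7⟩, r2, r3, r1⟩⟩
    ext t; simp only [Finset.mem_insert, Finset.mem_singleton]; tauto
  · refine ⟨x, y, ?_, ⟨⟨h3, h1, h2, h6.symm, h4, h5.symm, h9, h7, h8⟩, r3, r1, r2⟩⟩
    ext t; simp only [Finset.mem_insert, Finset.mem_singleton]; tauto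

theorem triangle_eq {Q : QuivRel} (hg : IsGentle Q) (st : SigmaTau Q) {T T' : Finset ℕ}
    (hT : TriangleSet Q T) (hT' : TriangleSet Q T') {a : ℕ} (ha : a ∈ T) (ha' : a ∈ T') :
    T = T' := by
  obtain ⟨b, c, rfl, h⟩ := triangle_at hT ha
  obtain ⟨b', c', rfl, h'⟩ := triangle_at hT' ha'
  simp only [IsTriangleTriple, rel_iff_stp hg st] at h h'
  obtain rfl := h.2.1.right h'.2.1
  obtain rfl := h.2.2.1.right h'.2.2.1
  rfl

theorem connected_card_le {Q : QuivRel} (hne : Q.V.Nonempty)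
    (hst : ∀ a ∈ Q.A, Q.src a ∈ Q.V ∧ Q.tgt a ∈ Q.V) (hc : Connected Q) :
    Q.V.card ≤ Q.A.card + 1 := by
  classical
  let G : SimpleGraph Q.V := SimpleGraph.fromRel fun x y => Adj Q x y
  have hmem : ∀ x y, Adj Q x y → x ∈ Q.V ∧ y ∈ Q.V := by
    rintro x y ⟨a, ha, ⟨rfl, rfl⟩ | ⟨rfl, rfl⟩⟩
    · exact hst a ha
    · exact (hst a ha).symm
  have hreach : ∀ x (hx : x ∈ Q.V) y, Relation.ReflTransGen (Adj Q) x y →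
      ∃ hy : y ∈ Q.V, G.Reachable ⟨x, hx⟩ ⟨y, hy⟩ := by
    intro x hx y h
    induction h with
    | refl => exact ⟨hx, .refl _⟩
    | @tail b c _ h2 ih =>
      obtain ⟨hb, hr⟩ := ih
      have hcV := (hmem _ _ h2).2
      refine ⟨hcV, hr.trans ?_⟩
      by_cases hbc : b = c
      · subst hbc; exact .refl _
      · apply SimpleGraph.Adj.reachable
        rw [SimpleGraph.fromRel_adj]
        exact ⟨by simpa using hbc, Or.inl h2⟩
  have hG : G.Connected := by
    have : Nonempty Q.V := hne.to_subtype
    refine ⟨fun x y => ?_⟩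
    exact (hreach x.1 x.2 y.1 (hc _ x.2 _ y.2)).2
  have h1 := hG.card_vert_le_card_edgeSet_add_one
  have h2 : Nat.card G.edgeSet ≤ Q.A.card := by
    have hex : ∀ e : G.edgeSet, ∃ a : Q.A,
        (e : Sym2 Q.V).map Subtype.val = s(Q.src a, Q.tgt a) := by
      rintro ⟨e, he⟩
      induction e using Sym2.ind with
      | _ x y =>
        rw [SimpleGraph.mem_edgeSet, SimpleGraph.fromRel_adj] at he
        obtain ⟨-, ⟨a, ha, h⟩ | ⟨a, ha, h⟩⟩ := he
        · refine ⟨⟨a, ha⟩, ?_⟩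
          simp only [Sym2.map_mk, Sym2.eq_iff]
          tauto
        · refine ⟨⟨a, ha⟩, ?_⟩
          simp only [Sym2.map_mk, Sym2.eq_iff]
          tauto
    choose f hf using hex
    have hinj : Function.Injective f := by
      intro e e' h
      apply Subtype.ext
      apply Sym2.map.injective Subtype.val_injective
      rw [hf, hf, h]
    have := Nat.card_le_card_of_injective f hinj
    simpa using this
  simp only [Nat.card_eq_fintype_card, Fintype.card_coe] at h1 h2
  omega

theorem delete_gentle {Q : QuivRel} (hg : IsGentle Q) (S : Finset ℕ)
    (hc : Connected (deleteArrows Q S)) : IsGentle (deleteArrows Q S) := by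
  obtain ⟨h1, h2, -, h4, h5, h6, h7, h8, h9, h10, n, h11⟩ := hg
  have hA : ∀ a, a ∈ (deleteArrows Q S).A ↔ a ∈ Q.A ∧ a ∉ S := fun a => Finset.mem_sdiff
  have hR : ∀ a b, (a, b) ∈ (deleteArrows Q S).rel ↔ (a, b) ∈ Q.rel ∧ a ∉ S ∧ b ∉ S :=
    fun a b => Finset.mem_filter
  refine ⟨h1, fun a ha => h2 a ((hA a).1 ha).1, hc, ?_, ?_, ?_, ?_, ?_, ?_, ?_, n, ?_⟩
  · rintro ⟨a, b⟩ hr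
    obtain ⟨hr, ha, hb⟩ := (hR a b).1 hr
    obtain ⟨k1, k2, k3⟩ := h4 _ hr
    exact ⟨(hA _).2 ⟨k1, ha⟩, (hA _).2 ⟨k2, hb⟩, k3⟩
  · intro x
    refine (Finset.card_le_card fun b hb => ?_).trans (h5 x)
    rw [Finset.mem_filter, hA] at hb
    exact Finset.mem_filter.2 ⟨hb.1.1, hb.2⟩
  · intro x
    refine (Finset.card_le_card fun b hb => ?_).trans (h6 x)
    rw [Finset.mem_filter, hA] at hb
    exact Finset.mem_filter.2 ⟨hb.1.1, hb.2⟩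
  · intro a ha
    rw [hA] at ha
    refine (Finset.card_le_card fun b hb => ?_).trans (h7 a ha.1)
    rw [Finset.mem_filter, hA, hR] at hb
    exact Finset.mem_filter.2 ⟨hb.1.1, hb.2.1, fun h => hb.2.2 ⟨h, hb.1.2, ha.2⟩⟩
  · intro a ha
    rw [hA] at ha
    refine (Finset.card_le_card fun b hb => ?_).trans (h8 a ha.1)
    rw [Finset.mem_filter, hA, hR] at hb
    exact Finset.mem_filter.2 ⟨hb.1.1, hb.2.1, fun h => hb.2.2 ⟨h, ha.2, hb.1.2⟩⟩
  · intro a ha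
    rw [hA] at ha
    refine (Finset.card_le_card fun b hb => ?_).trans (h9 a ha.1)
    rw [Finset.mem_filter, hA, hR] at hb
    exact Finset.mem_filter.2 ⟨hb.1.1, hb.2.1⟩
  · intro a ha
    rw [hA] at ha
    refine (Finset.card_le_card fun b hb => ?_).trans (h10 a ha.1)
    rw [Finset.mem_filter, hA, hR] at hb
    exact Finset.mem_filter.2 ⟨hb.1.1, hb.2.1⟩
  · rintro l ⟨k1, k2, k3⟩ hl
    obtain ⟨a, b, hr, hi⟩ := h11 l ⟨k1, fun a ha => ((hA a).1 (k2 a ha)).1, k3⟩ hl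
    have ha := k2 a (hi.subset (by simp))
    have hb := k2 b (hi.subset (by simp))
    exact ⟨a, b, (hR a b).2 ⟨hr, ((hA a).1 ha).2, ((hA b).1 hb).2⟩, hi⟩

theorem Adj.symm' {Q : QuivRel} {x y : ℕ} (h : Adj Q x y) : Adj Q y x := by
  obtain ⟨a, ha, h⟩ := h
  exact ⟨a, ha, h.symm⟩

/-- Let `𝚫 ∈ 𝒜` and let `𝒪₁, …, 𝒪_m` be *all* the pairwise
distinct triangles in `𝚫`.  Removing one arrow from each triangle yields a
gentle quiver of tree type. -/
theorem stmt9 (Q : QuivRel) (st : SigmaTau Q) (hA : ClassA Q st)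
    (m : ℕ) (O : Fin m → Finset ℕ)
    (hOtri : ∀ i, TriangleSet Q (O i)) (hOinj : Function.Injective O)
    (hall : ∀ T : Finset ℕ, TriangleSet Q T → ∃ i, T = O i)
    (α : Fin m → ℕ) (hα : ∀ i, α i ∈ O i) :
    IsGentle (deleteArrows Q (Finset.image α Finset.univ)) ∧
    TreeType (deleteArrows Q (Finset.image α Finset.univ)) := by
  obtain ⟨hg, m', p, hf⟩ := hA
  obtain ⟨c1, c2, c3, c4⟩ := classA_counts hg st m' p hf
  have key : ∀ i j a, a ∈ O i → a ∈ O j → i = j := fun i j a h1 h2 =>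
    hOinj (triangle_eq hg st (hOtri i) (hOtri j) h1 h2)
  have hαinj : Function.Injective α := fun i j h => key i j (α i) (hα i) (h ▸ hα j)
  set S := Finset.image α Finset.univ with hS
  have hSA : S ⊆ Q.A := by
    intro a ha
    simp only [hS, Finset.mem_image, Finset.mem_univ, true_and] at ha
    obtain ⟨i, rfl⟩ := ha
    obtain ⟨b, c, -, h⟩ := triangle_at (hOtri i) (hα i)
    exact h.1.1
  have hScard : S.card = m := by
    rw [hS, Finset.card_image_of_injective _ hαinj]; simp
  have hedge : ∀ a ∈ Q.A, a ∉ S → Adj (deleteArrows Q S) (Q.src a) (Q.tgt a) :=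
    fun a ha haS => ⟨a, Finset.mem_sdiff.2 ⟨ha, haS⟩, Or.inl ⟨rfl, rfl⟩⟩
  have hjoin : ∀ a ∈ Q.A, Relation.ReflTransGen (Adj (deleteArrows Q S)) (Q.src a) (Q.tgt a) ∧
      Relation.ReflTransGen (Adj (deleteArrows Q S)) (Q.tgt a) (Q.src a) := by
    intro a ha
    by_cases haS : a ∈ S
    · simp only [hS, Finset.mem_image, Finset.mem_univ, true_and] at haS
      obtain ⟨i, rfl⟩ := haS
      obtain ⟨b, c, hO, ⟨-, h2, h3, h4, h5, h6, h7, h8, h9⟩, -⟩ := triangle_at (hOtri i) (hα i)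
      have hnot : ∀ x ∈ O i, α i ≠ x → x ∉ S := by
        intro x hx hne hxS
        simp only [hS, Finset.mem_image, Finset.mem_univ, true_and] at hxS
        obtain ⟨j, rfl⟩ := hxS
        exact hne (congrArg α (key i j _ hx (hα j)))
      have e1 := hedge b h2 (hnot b (by rw [hO]; simp) h4)
      have e2 := hedge c h3 (hnot c (by rw [hO]; simp) h6)
      rw [← h7] at e1
      rw [h9, ← h8] at e2
      exact ⟨(Relation.ReflTransGen.single e1.symm').tail e2.symm',
        (Relation.ReflTransGen.single e2).tail e1⟩
    · have := hedge a ha haS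
      exact ⟨.single this, .single this.symm'⟩
  have hconn : Connected (deleteArrows Q S) := by
    intro x hx y hy
    have h := hg.2.2.1 x hx y hy
    clear hy
    induction h with
    | refl => exact .refl
    | tail _ h2 ih =>
      refine ih.trans ?_
      obtain ⟨a, ha, ⟨rfl, rfl⟩ | ⟨rfl, rfl⟩⟩ := h2
      · exact (hjoin a ha).1
      · exact (hjoin a ha).2
  have hgent := delete_gentle hg S hconn
  refine ⟨hgent, ?_⟩
  have b1 := connected_card_le hgent.1 hgent.2.1 hconn
  have b2 : (deleteArrows Q S).A.card + S.card = Q.A.card :=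
    Finset.card_sdiff_add_card_eq_card hSA
  have b3 := N_card hg st
  have b4 := arrows_cover hg st
  have b5 := C_card c3
  have b6 : m' ≤ m := by
    have hex : ∀ X : {X | COrbit Q st X}, ∃ i, (O i : Set ℕ) = X := by
      rintro ⟨X, hX⟩
      obtain ⟨T, hT, hT'⟩ := orbit_triangle hg st hX (c3 X hX)
      obtain ⟨i, rfl⟩ := hall T hT'
      exact ⟨i, hT⟩
    choose f hf' using hex
    have hinj : Function.Injective f := by
      intro X Y h
      apply Subtype.ext
      rw [← hf', ← hf', h]
    have := Nat.card_le_card_of_injective f hinj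
    rw [Nat.card_coe_set_eq, c4] at this
    simpa using this
  have b7 : (deleteArrows Q S).V.card = Q.V.card := rfl
  unfold TreeType
  rw [c1] at b3
  rw [c2] at b4
  rw [c4] at b5
  omega

end GentleQuiv
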